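/- Every graph G has a structured tree decomposition of width equal to tw(G), i.e., a tree decomposition (T, χ) of width tw(G) such that every bag χ(v) is a potential maximal clique of G (a maximal clique of G+F for some minimal chordal completion F of G). -/

import Mathlib

universe u v

variable {V : Type u}

/-- The open neighborhood of a set `D`: vertices outside `D` with a neighbor in `D`. -/
def nbhd (G : SimpleGraph V) (D : Set V) : Set V :=
  {w | w ∉ D ∧ ∃ u ∈ D, G.Adj u w}

/-- `u` and `w` are joined by a walk all of whose vertices lie in `S`. -/
def ConnectedIn (G : SimpleGraph V) (S : Set V) (u w : V) : Prop :=
  ∃ p : G.Walk u w, ∀ x ∈ p.support, x ∈ S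

/-- `D` is a connected component of the subgraph of `G` induced on `S`. -/
def IsCompOf (G : SimpleGraph V) (S : Set V) (D : Set V) : Prop :=
  D.Nonempty ∧ D ⊆ S ∧ (∀ u ∈ D, ∀ w ∈ D, ConnectedIn G D u w) ∧
    ∀ u ∈ D, ∀ w ∈ S, G.Adj u w → w ∈ D

/-- `X` is a minimal separator: some `u, w` outside `X` are separated by `X`
but by no proper subset of `X`. -/
def IsMinimalSeparator (G : SimpleGraph V) (X : Set V) : Prop :=
  ∃ u w : V, u ∉ X ∧ w ∉ X ∧ ¬ ConnectedIn G Xᶜ u w ∧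
    ∀ Y : Set V, Y ⊂ X → ConnectedIn G Yᶜ u w

/-- A tree decomposition of the subgraph of `G` induced on `W`. -/
structure IsTreeDecompOn {T : Type v} (G : SimpleGraph V) (W : Set V)
    (tree : SimpleGraph T) (χ : T → Set V) : Prop where
  isTree : tree.IsTree
  bags_subset : ∀ t, χ t ⊆ W
  mem_bag : ∀ x ∈ W, ∃ t, x ∈ χ t
  edge_bag : ∀ x ∈ W, ∀ y ∈ W, G.Adj x y → ∃ t, x ∈ χ t ∧ y ∈ χ t
  trace_connected : ∀ x : V, ∀ t₁, x ∈ χ t₁ → ∀ t₂, x ∈ χ t₂ →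
    ConnectedIn tree {t | x ∈ χ t} t₁ t₂

/-- A tree decomposition of `G`. -/
def IsTreeDecomp {T : Type v} (G : SimpleGraph V)
    (tree : SimpleGraph T) (χ : T → Set V) : Prop :=
  IsTreeDecompOn G Set.univ tree χ

/-- The treewidth of `G`: the least `w` such that `G` has a tree decomposition
all of whose bags have at most `w + 1` vertices. -/
noncomputable def treewidth (G : SimpleGraph V) : ℕ :=
  sInf {w | ∃ (n : ℕ) (tree : SimpleGraph (Fin n)) (χ : Fin n → Set V),
    IsTreeDecomp G tree χ ∧ ∀ t, (χ t).ncard ≤ w + 1}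

/-- `G` is chordal: it has no induced cycle of length at least 4. -/
def IsChordal (G : SimpleGraph V) : Prop :=
  ∀ n : ℕ, 4 ≤ n → ¬ ∃ f : Fin n → V, Function.Injective f ∧
    ∀ i j : Fin n, G.Adj (f i) (f j) ↔
      ((i.val + 1) % n = j.val ∨ (j.val + 1) % n = i.val)

/-- `H` is a minimal chordal completion (fill-in) of `G`. -/
def IsMinimalChordalCompletion (G H : SimpleGraph V) : Prop :=
  G ≤ H ∧ IsChordal H ∧
    ∀ H' : SimpleGraph V, G ≤ H' → H' ≤ H → IsChordal H' → H' = H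

/-- `Ω` is a potential maximal clique of `G`: a maximal clique of some minimal
chordal completion of `G`. -/
def IsPMC (G : SimpleGraph V) (Ω : Set V) : Prop :=
  ∃ H : SimpleGraph V, IsMinimalChordalCompletion G H ∧
    H.IsClique Ω ∧ ∀ Ω' : Set V, H.IsClique Ω' → Ω ⊆ Ω' → Ω' = Ω

/-- The clique number `ω(G)`. -/
noncomputable def cliqueNumber (G : SimpleGraph V) : ℕ :=
  sSup {n | ∃ s : Finset V, G.IsNClique n s}

/-- A stable (independent) set of vertices. -/
def StableSet (G : SimpleGraph V) (S : Set V) : Prop :=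
  ∀ u ∈ S, ∀ w ∈ S, ¬ G.Adj u w

/-- The Ramsey number `R(t, s)`: the least `n` such that every graph on `n`
vertices contains a clique of size `t` or a stable set of size `s`. -/
noncomputable def ramseyNum (t s : ℕ) : ℕ :=
  sInf {n | ∀ G : SimpleGraph (Fin n),
    (∃ K : Finset (Fin n), G.IsNClique t K) ∨
    (∃ S : Finset (Fin n), S.card = s ∧ StableSet G ↑S)}

/-- `G` is `d`-degenerate: every induced subgraph has a vertex of degree less
than `d` (within that subgraph). -/
def DegenerateLE (G : SimpleGraph V) (d : ℕ) : Prop :=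
  ∀ W : Set V, W.Nonempty → ∃ x ∈ W, (W ∩ G.neighborSet x).ncard < d

/-- `D` is the big component for `x`: a component of `G \ N[x]` with more than
half of all vertices. -/
def IsBigComp (G : SimpleGraph V) (x : V) (D : Set V) : Prop :=
  IsCompOf G ((insert x (G.neighborSet x))ᶜ) D ∧ Nat.card V < 2 * D.ncard

/-- The `C`-side of the canonical star separation: `C(x) = {x} ∪ N(B(x))`. -/
def Cside (G : SimpleGraph V) (B : V → Set V) (x : V) : Set V :=
  insert x (nbhd G (B x))

/-- The `A`-side of the canonical star separation. -/
def Aside (G : SimpleGraph V) (B : V → Set V) (x : V) : Set V :=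
  (B x ∪ Cside G B x)ᶜ

/-- Star twins. -/
def StarTwins (G : SimpleGraph V) (B : V → Set V) (x y : V) : Prop :=
  B x = B y ∧ Cside G B x \ {x} = Cside G B y \ {y} ∧
    Aside G B x ∪ {x} = Aside G B y ∪ {y}

/-- The relation `≤_A` (partial order by `A`-sides, ties among star twins
broken by the total order `O`). -/
def leA (G : SimpleGraph V) (B : V → Set V) (O : V → ℕ) (x y : V) : Prop :=
  x = y ∨ (StarTwins G B x y ∧ O x < O y) ∨
    (¬ StarTwins G B x y ∧ y ∈ Aside G B x)

/-- `Core(S)`: the `≤_A`-minimal elements of `S`. -/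
def CoreS (G : SimpleGraph V) (S : Set V) (B : V → Set V) (O : V → ℕ) : Set V :=
  {x ∈ S | ∀ u ∈ S, leA G B O u x → u = x}

/-- The central bag `β(S)`. -/
def centralBag (G : SimpleGraph V) (S : Set V) (B : V → Set V) (O : V → ℕ) :
    Set V :=
  ⋂ x ∈ CoreS G S B O, (B x ∪ Cside G B x)

/-- `G` has a clique cutset. -/
def HasCliqueCutset (G : SimpleGraph V) : Prop :=
  ∃ K : Set V, G.IsClique K ∧ ∃ u w, u ∉ K ∧ w ∉ K ∧ ¬ ConnectedIn G Kᶜ u w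

/-- A chordless (induced) path, as a walk. -/
def IsInducedPathW (G : SimpleGraph V) {a b : V} (P : G.Walk a b) : Prop :=
  P.IsPath ∧ ∀ i j : ℕ, i + 2 ≤ j → j ≤ P.length →
    ¬ G.Adj (P.getVert i) (P.getVert j)

/-- Two `a`–`b` walks have disjoint and anticomplete interiors. -/
def IntDisjAnticomplete (G : SimpleGraph V) {a b : V} (P Q : G.Walk a b) : Prop :=
  ∀ u ∈ P.support, ∀ w ∈ Q.support, u ≠ a → u ≠ b → w ≠ a → w ≠ b →
    u ≠ w ∧ ¬ G.Adj u w

/-- `G` contains a theta (as an induced subgraph). -/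
def HasTheta (G : SimpleGraph V) : Prop :=
  ∃ (a b : V) (P₁ P₂ P₃ : G.Walk a b),
    ¬ G.Adj a b ∧
    IsInducedPathW G P₁ ∧ 2 ≤ P₁.length ∧
    IsInducedPathW G P₂ ∧ 2 ≤ P₂.length ∧
    IsInducedPathW G P₃ ∧ 2 ≤ P₃.length ∧
    IntDisjAnticomplete G P₁ P₂ ∧
    IntDisjAnticomplete G P₁ P₃ ∧
    IntDisjAnticomplete G P₂ P₃



open SimpleGraph

/-- In a tree, a connected set `S` with a node `a` closest to the root `r`: the path from `r` to any
node of `S` passes through `a` and stays in `S` afterwards. -/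
lemma tree_path_top {T : Type*} {tree : SimpleGraph T} (hT : tree.IsTree) (r : T) (S : Set T)
    (hS : ∀ s ∈ S, ∀ t ∈ S, ConnectedIn tree S s t) (a : T) (ha : a ∈ S)
    (hmin : ∀ s ∈ S, tree.dist r a ≤ tree.dist r s) (t : T) (ht : t ∈ S)
    (q : tree.Walk r t) (hq : q.IsPath) :
    q.getVert (tree.dist r a) = a ∧ ∀ i, tree.dist r a ≤ i → q.getVert i ∈ S := by
  classical
  obtain ⟨p, hp⟩ := hS a ha t ht
  obtain ⟨Q, hQ, hQl⟩ := hT.1.exists_path_of_dist r a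
  have hP : ∀ x ∈ p.bypass.support, x ∈ S := fun x hx => hp x (p.support_bypass_subset_support hx)
  have hPp : p.bypass.IsPath := p.bypass_isPath
  have happ : (Q.append p.bypass).IsPath := by
    rw [Walk.isPath_def, Walk.support_append, List.nodup_append]
    refine ⟨hQ.support_nodup, hPp.support_nodup.tail, ?_⟩
    rintro x hx y hy rfl
    have hxS := hP x (List.mem_of_mem_tail hy)
    have h1 := hmin x hxS
    have h2 : tree.dist r x ≤ (Q.takeUntil x hx).length := dist_le _
    have h3 : (Q.takeUntil x hx).length + (Q.dropUntil x hx).length = Q.length := by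
      rw [← Walk.length_append, Walk.take_spec]
    have h4 : (Q.dropUntil x hx).length = 0 := by omega
    have h5 : x = a := Walk.eq_of_length_eq_zero h4
    subst h5
    have := hPp.support_nodup
    rw [Walk.support_eq_cons] at this
    exact (List.nodup_cons.1 this).1 hy
  have hqe : q = Q.append p.bypass := (hT.existsUnique_path r t).unique hq happ
  have key : ∀ i, tree.dist r a ≤ i → q.getVert i = p.bypass.getVert (i - tree.dist r a) := by
    intro i hi
    rw [hqe, Walk.getVert_append, hQl, if_neg (by omega)]
  refine ⟨by rw [key _ le_rfl]; simp, fun i hi => ?_⟩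
  rw [key i hi]
  exact hP _ (Walk.getVert_mem_support _ _)

/-- Every nonempty set of vertices contains a vertex whose bag-neighbours inside the set lie in
one common bag. -/
lemma exists_top_vertex {T : Type*} {G : SimpleGraph V} {tree : SimpleGraph T}
    {χ : T → Set V} (h : IsTreeDecomp G tree χ) (W : Set V) (hW : W.Finite) (hne : W.Nonempty) :
    ∃ v ∈ W, ∃ s, v ∈ χ s ∧ ∀ u ∈ W, (∃ t, u ∈ χ t ∧ v ∈ χ t) → u ∈ χ s := by
  classical
  obtain ⟨r⟩ := h.isTree.1.nonempty
  have htop : ∀ x : V, ∃ a, x ∈ χ a ∧ ∀ s, x ∈ χ s → tree.dist r a ≤ tree.dist r s := by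
    intro x
    obtain ⟨t, ht⟩ := h.mem_bag x trivial
    obtain ⟨a, ha, hm⟩ := exists_minimal_of_wellFoundedLT
      (fun n => ∃ s, x ∈ χ s ∧ tree.dist r s = n) ⟨_, t, ht, rfl⟩
    obtain ⟨s, hs, rfl⟩ := ha
    refine ⟨s, hs, fun s' hs' => ?_⟩
    by_contra hc
    exact hc (hm ⟨s', hs', rfl⟩ (by omega))
  choose top htop hmin using htop
  obtain ⟨v, hv, hmax⟩ := hW.exists_maximalFor (fun x => tree.dist r (top x)) W hne
  refine ⟨v, hv, top v, htop v, ?_⟩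
  rintro u hu ⟨t, hut, hvt⟩
  obtain ⟨q, hq, -⟩ := h.isTree.existsUnique_path r t
  have h1 := tree_path_top h.isTree r {t | v ∈ χ t} (fun s hs t ht => h.trace_connected v s hs t ht)
    (top v) (htop v) (hmin v) t hvt q hq
  have h2 := tree_path_top h.isTree r {t | u ∈ χ t} (fun s hs t ht => h.trace_connected u s hs t ht)
    (top u) (htop u) (hmin u) t hut q hq
  have hle : tree.dist r (top u) ≤ tree.dist r (top v) := by
    by_contra hc
    have := hmax hu (by simp only; omega)
    simp only at this; omega
  have := h2.2 _ hle
  rwa [h1.1] at this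

/-- The graph obtained by completing all bags. -/
def bagGraph {T : Type*} (χ : T → Set V) : SimpleGraph V where
  Adj x y := x ≠ y ∧ ∃ t, x ∈ χ t ∧ y ∈ χ t
  symm := ⟨fun _ _ ⟨h, t, a, b⟩ => ⟨h.symm, t, b, a⟩⟩
  loopless := ⟨fun _ h => h.1 rfl⟩

lemma bagGraph_chordal {T : Type*} {G : SimpleGraph V} {tree : SimpleGraph T}
    {χ : T → Set V} (h : IsTreeDecomp G tree χ) : IsChordal (bagGraph χ) := by
  rintro n hn ⟨f, hf, hadj⟩
  obtain ⟨v, ⟨i, rfl⟩, s, hs, hall⟩ := exists_top_vertex h (Set.range f) (Set.finite_range f)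
    ⟨_, ⟨0, by omega⟩, rfl⟩
  obtain ⟨i, hi⟩ := i
  have hnb : ∀ j : Fin n, (((⟨i, hi⟩ : Fin n).val + 1) % n = j.val ∨
      (j.val + 1) % n = (⟨i, hi⟩ : Fin n).val) → f j ∈ χ s := by
    intro j hj
    obtain ⟨-, t, h1, h2⟩ := (hadj ⟨i, hi⟩ j).2 hj
    exact hall _ ⟨j, rfl⟩ ⟨t, h2, h1⟩
  have key : ∀ a b : ℕ, a < n → b < n → a ≠ b → ((i + 1) % n = a ∨ (a + 1) % n = i) →
      ((i + 1) % n = b ∨ (b + 1) % n = i) → ((a + 1) % n = b ∨ (b + 1) % n = a) := by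
    intro a b ha hb hab h1 h2
    exact (hadj ⟨a, ha⟩ ⟨b, hb⟩).1 ⟨fun hc => hab (by simpa using hf hc), s,
      hnb ⟨a, ha⟩ h1, hnb ⟨b, hb⟩ h2⟩
  have e : ∀ x, x < n → (x + 1) % n = if x + 1 = n then 0 else x + 1 := by
    intro x hx
    split_ifs with h
    · simp [h]
    · exact Nat.mod_eq_of_lt (by omega)
  obtain ⟨a, ha⟩ : ∃ a, (i + 1 = n ∧ a = 0) ∨ (i + 1 ≠ n ∧ a = i + 1) := by
    by_cases hin : i + 1 = n
    · exact ⟨0, Or.inl ⟨hin, rfl⟩⟩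
    · exact ⟨i + 1, Or.inr ⟨hin, rfl⟩⟩
  obtain ⟨b, hb⟩ : ∃ b, (i = 0 ∧ b + 1 = n) ∨ (i ≠ 0 ∧ b + 1 = i) := by
    by_cases hin : i = 0
    · exact ⟨n - 1, Or.inl ⟨hin, by omega⟩⟩
    · exact ⟨i - 1, Or.inr ⟨hin, by omega⟩⟩
  have han : a < n := by omega
  have hbn : b < n := by omega
  have := key a b han hbn (by omega)
    (Or.inl (by rw [e i hi]; split_ifs <;> omega)) (Or.inr (by rw [e b hbn]; split_ifs <;> omega))
  rw [e a han, e b hbn] at this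
  split_ifs at this <;> omega

lemma clique_in_bag {T : Type*} {G : SimpleGraph V} {tree : SimpleGraph T}
    {χ : T → Set V} (h : IsTreeDecomp G tree χ) (K : Set V) (hfin : K.Finite)
    (hK : (bagGraph χ).IsClique K) : ∃ t, K ⊆ χ t := by
  rcases K.eq_empty_or_nonempty with rfl | hne
  · obtain ⟨t⟩ := h.isTree.1.nonempty
    exact ⟨t, by simp⟩
  obtain ⟨v, hv, s, hs, hall⟩ := exists_top_vertex h K hfin hne
  refine ⟨s, fun u hu => ?_⟩
  by_cases huv : u = v
  · exact huv ▸ hs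
  · exact hall u hu (hK hu hv huv).2

/-- Chordality forces: two vertices with a common neighbour `v`, joined by a path avoiding the
closed neighbourhood of `v`, are adjacent. -/
lemma chordal_adj {H : SimpleGraph V} (hH : IsChordal H) (v x y : V) (C : Set V)
    (hvx : H.Adj v x) (hvy : H.Adj v y) (hxy : x ≠ y) (hC : ∀ c ∈ C, c ≠ v ∧ ¬ H.Adj v c)
    (hconn : ConnectedIn H (insert x (insert y C)) x y) : H.Adj x y := by
  classical
  by_contra hnadj
  let K : SimpleGraph V :=
    { Adj := fun a b => H.Adj a b ∧ a ∈ insert x (insert y C) ∧ b ∈ insert x (insert y C)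
      symm := ⟨fun _ _ ⟨h, a, b⟩ => ⟨h.symm, b, a⟩⟩
      loopless := ⟨fun _ h => h.1.ne rfl⟩ }
  have hreach : K.Reachable x y := by
    obtain ⟨p, hp⟩ := hconn
    exact ⟨p.transfer K (fun e he => by
      induction e with
      | _ a b =>
        exact ⟨p.adj_of_mem_edges he, hp _ (p.fst_mem_support_of_mem_edges he),
          hp _ (p.snd_mem_support_of_mem_edges he)⟩)⟩
  obtain ⟨p, hp, hpl⟩ := hreach.exists_path_of_dist
  set m := p.length with hm
  have hd : ∀ i ≤ m, K.dist x (p.getVert i) = i := by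
    intro i hi
    have h1 : K.dist x (p.getVert i) ≤ (p.take i).length := dist_le _
    have h2 : K.dist (p.getVert i) y ≤ (p.drop i).length := dist_le _
    rw [Walk.take_length] at h1
    rw [Walk.drop_length] at h2
    have h3 := Reachable.dist_triangle_left (G := K) ⟨p.take i⟩ y
    omega
  have hadjd : ∀ i ≤ m, ∀ j ≤ m, K.Adj (p.getVert i) (p.getVert j) → j ≤ i + 1 := by
    intro i hi j hj hij
    have h3 := Reachable.dist_triangle_left (G := K) ⟨p.take i⟩ (p.getVert j)
    rw [hd i hi, hd j hj, dist_eq_one_iff_adj.2 hij] at h3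
    exact h3
  have hm2 : 2 ≤ m := by
    have h0 : m ≠ 0 := fun h => hxy (Walk.eq_of_length_eq_zero h)
    have h1 : m ≠ 1 := fun h => hnadj (dist_eq_one_iff_adj.1 (hpl.symm.trans h)).1
    omega
  have hmem : ∀ i ≤ m, p.getVert i ∈ insert x (insert y C) := by
    intro i hi
    rcases Nat.lt_or_ge i m with h | h
    · exact (p.adj_getVert_succ h).2.1
    · rw [p.getVert_of_length_le h]; simp
  have hinj : ∀ i ≤ m, ∀ j ≤ m, p.getVert i = p.getVert j → i = j := by
    intro i hi j hj h
    rw [← hd i hi, h, hd j hj]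
  have h0 : p.getVert 0 = x := p.getVert_zero
  have hmy : p.getVert m = y := p.getVert_length
  have hint : ∀ i ≤ m, i ≠ 0 → i ≠ m → p.getVert i ∈ C := by
    intro i hi hi0 him
    rcases hmem i hi with h | h | h
    · exact absurd (hinj i hi 0 (by omega) (h.trans h0.symm)) hi0
    · exact absurd (hinj i hi m le_rfl (h.trans hmy.symm)) him
    · exact h
  have hHadj : ∀ i ≤ m, ∀ j ≤ m, H.Adj (p.getVert i) (p.getVert j) ↔ (i + 1 = j ∨ j + 1 = i) := by
    intro i hi j hj
    constructor
    · intro h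
      have a := hadjd i hi j hj ⟨h, hmem i hi, hmem j hj⟩
      have b := hadjd j hj i hi ⟨h.symm, hmem j hj, hmem i hi⟩
      have c : i ≠ j := fun c => h.ne (c ▸ rfl)
      omega
    · rintro (rfl | rfl)
      · exact (p.adj_getVert_succ (by omega)).1
      · exact (p.adj_getVert_succ (by omega)).1.symm
  have hv : ∀ i ≤ m, H.Adj v (p.getVert i) ↔ (i = 0 ∨ i = m) := by
    intro i hi
    constructor
    · intro h
      by_contra hc
      push Not at hc
      exact (hC _ (hint i hi hc.1 hc.2)).2 h
    · rintro (rfl | rfl)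
      · rwa [h0]
      · rwa [hmy]
  have hvne : ∀ i ≤ m, p.getVert i ≠ v := by
    intro i hi h
    rcases hmem i hi with h' | h' | h'
    · exact hvx.ne (h.symm.trans h')
    · exact hvy.ne (h.symm.trans h')
    · exact (hC _ h').1 h
  refine hH (m + 2) (by omega) ⟨fun i => if i.val ≤ m then p.getVert i.val else v, ?_, ?_⟩
  · rintro ⟨i, hi⟩ ⟨j, hj⟩ h
    simp only at h
    split_ifs at h with h1 h2 h2
    · simpa using hinj i h1 j h2 h
    · exact absurd h (hvne i h1)
    · exact absurd h.symm (hvne j h2)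
    · simp; omega
  · rintro ⟨i, hi⟩ ⟨j, hj⟩
    have e : ∀ x, x < m + 2 → (x + 1) % (m + 2) = if x = m + 1 then 0 else x + 1 := by
      intro x hx
      split_ifs with h
      · simp [h]
      · exact Nat.mod_eq_of_lt (by omega)
    simp only [e i hi, e j hj]
    by_cases h1 : i ≤ m <;> by_cases h2 : j ≤ m
    · rw [if_pos h1, if_pos h2, hHadj i h1 j h2]
      split_ifs <;> omega
    · rw [if_pos h1, if_neg h2, H.adj_comm, hv i h1]
      split_ifs <;> omega
    · rw [if_neg h1, if_pos h2, hv j h2]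
      split_ifs <;> omega
    · rw [if_neg h1, if_neg h2]
      simp only [SimpleGraph.irrefl, false_iff]
      split_ifs <;> omega

/-- `v` is simplicial in `H[W]`. -/
def Simpl (H : SimpleGraph V) (W : Set V) (v : V) : Prop :=
  H.IsClique (W ∩ H.neighborSet v)

lemma ConnectedIn.mono {G : SimpleGraph V} {S S' : Set V} (h : S ⊆ S') {u w : V}
    (hc : ConnectedIn G S u w) : ConnectedIn G S' u w := by
  obtain ⟨p, hp⟩ := hc
  exact ⟨p, fun x hx => h (hp x hx)⟩

lemma ConnectedIn.trans {G : SimpleGraph V} {S : Set V} {u w z : V}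
    (h1 : ConnectedIn G S u w) (h2 : ConnectedIn G S w z) : ConnectedIn G S u z := by
  obtain ⟨p, hp⟩ := h1
  obtain ⟨q, hq⟩ := h2
  refine ⟨p.append q, fun x hx => ?_⟩
  rcases (Walk.mem_support_append_iff _ _).1 hx with h | h
  exacts [hp x h, hq x h]

lemma ConnectedIn.symm {G : SimpleGraph V} {S : Set V} {u w : V}
    (h1 : ConnectedIn G S u w) : ConnectedIn G S w u := by
  obtain ⟨p, hp⟩ := h1
  exact ⟨p.reverse, fun x hx => hp x (by simpa using hx)⟩

lemma ConnectedIn.of_adj {G : SimpleGraph V} {S : Set V} {u w : V} (h : G.Adj u w)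
    (hu : u ∈ S) (hw : w ∈ S) : ConnectedIn G S u w :=
  ⟨h.toWalk, by simp [hu, hw]⟩

lemma ConnectedIn.refl {G : SimpleGraph V} {S : Set V} {u : V} (hu : u ∈ S) :
    ConnectedIn G S u u := ⟨Walk.nil, by simpa using hu⟩

lemma ConnectedIn.right_mem {G : SimpleGraph V} {S : Set V} {u w : V}
    (h : ConnectedIn G S u w) : w ∈ S := by
  obtain ⟨p, hp⟩ := h
  exact hp _ p.end_mem_support

lemma exists_simplicial_away {H : SimpleGraph V} (hH : IsChordal H) (n : ℕ) :
    ∀ (W : Set V), W.Finite → W.ncard = n → ∀ v ∈ W, ∀ z ∈ W, z ≠ v → ¬ H.Adj v z →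
      ∃ w ∈ W, w ≠ v ∧ ¬ H.Adj v w ∧ Simpl H W w := by
  classical
  induction n using Nat.strong_induction_on with
  | _ n ih =>
  intro W hWf hWn v hv z hz hzv hvz
  let R : Set V := {w ∈ W | w ≠ v ∧ ¬ H.Adj v w}
  let C : Set V := {w | ConnectedIn H R z w}
  have hzR : z ∈ R := ⟨hz, hzv, hvz⟩
  have hzC : z ∈ C := ConnectedIn.refl hzR
  have hCR : C ⊆ R := fun w hw => hw.right_mem
  have hCclosed : ∀ c ∈ C, ∀ w ∈ R, H.Adj c w → w ∈ C := fun c hc w hw h =>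
    ConnectedIn.trans hc (ConnectedIn.of_adj h (hCR hc) hw)
  -- the walk stays in C
  have hCC : ∀ c ∈ C, ConnectedIn H C z c := by
    rintro c ⟨p, hp⟩
    refine ⟨p, fun x hx => ⟨p.takeUntil x hx, fun y hy => hp y (p.support_takeUntil_subset_support hx hy)⟩⟩
  let S : Set V := {s ∈ W | s ∉ C ∧ ∃ c ∈ C, H.Adj c s}
  have hSv : ∀ s ∈ S, H.Adj v s := by
    rintro s ⟨hsW, hsC, c, hc, hcs⟩
    by_contra hn
    by_cases hsv : s = v
    · subst hsv
      exact (hCR hc).2.2 hcs.symm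
    · exact hsC (hCclosed c hc s ⟨hsW, hsv, hn⟩ hcs)
  have hSclique : H.IsClique S := by
    intro x hx y hy hxy
    refine chordal_adj hH v x y C (hSv x hx) (hSv y hy) hxy (fun c hc => (hCR hc).2) ?_
    obtain ⟨-, -, c, hc, hcx⟩ := hx
    obtain ⟨-, -, d, hd, hdy⟩ := hy
    refine (ConnectedIn.of_adj hcx.symm (by simp) (by simp [hc])).trans
      (ConnectedIn.trans (ConnectedIn.mono ?_ ((hCC c hc).symm.trans (hCC d hd)))
        (ConnectedIn.of_adj hdy (by simp [hd]) (by simp)))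
    intro a ha
    simp [ha]
  have hsub : C ∪ S ⊆ W := by
    rintro a (h | h)
    exacts [(hCR h).1, h.1]
  have hvn : v ∉ C ∪ S := by
    rintro (h | h)
    · exact (hCR h).2.1 rfl
    · exact (hSv v h).ne rfl
  have hlt : (C ∪ S).ncard < n := by
    rw [← hWn]
    exact Set.ncard_lt_ncard ⟨hsub, fun h => hvn (h hv)⟩ hWf
  have hfin : (C ∪ S).Finite := hWf.subset hsub
  -- a simplicial vertex of C ∪ S inside C is enough
  have hfinish : ∀ w ∈ C, Simpl H (C ∪ S) w → ∃ w ∈ W, w ≠ v ∧ ¬ H.Adj v w ∧ Simpl H W w := by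
    intro w hw hs
    refine ⟨w, (hCR hw).1, (hCR hw).2.1, (hCR hw).2.2, ?_⟩
    refine Set.Pairwise.mono ?_ hs
    rintro a ⟨haW, haw⟩
    refine ⟨?_, haw⟩
    by_cases haC : a ∈ C
    · exact Or.inl haC
    · exact Or.inr ⟨haW, haC, w, hw, haw⟩
  by_cases h1 : ∃ s ∈ S, ∃ u ∈ C ∪ S, u ≠ s ∧ ¬ H.Adj s u
  · obtain ⟨s, hs, u, hu, hus, hsu⟩ := h1
    obtain ⟨w, hw, hws, hsw, hsim⟩ := ih _ hlt (C ∪ S) hfin rfl s (Or.inr hs) u hu hus hsu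
    rcases hw with hw | hw
    · exact hfinish w hw hsim
    · exact absurd (hSclique hs hw hws.symm) hsw
  · push Not at h1
    by_cases h2 : ∃ c ∈ C, ∃ u ∈ C ∪ S, u ≠ c ∧ ¬ H.Adj c u
    · obtain ⟨s, hs, u, hu, hus, hsu⟩ := h2
      obtain ⟨w, hw, hws, hsw, hsim⟩ := ih _ hlt (C ∪ S) hfin rfl s (Or.inl hs) u hu hus hsu
      rcases hw with hw | hw
      · exact hfinish w hw hsim
      · exact absurd (h1 w hw s (Or.inl hs) hws.symm).symm hsw
    · push Not at h2
      refine hfinish z hzC ?_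
      rintro a ⟨ha, -⟩ b ⟨hb, -⟩ hab
      rcases ha with ha | ha
      · exact h2 a ha b hb hab.symm
      · exact h1 a ha b hb hab.symm

lemma exists_simplicial {H : SimpleGraph V} (hH : IsChordal H) (W : Set V) (hW : W.Finite)
    (hne : W.Nonempty) : ∃ w ∈ W, Simpl H W w := by
  by_cases h : H.IsClique W
  · obtain ⟨w, hw⟩ := hne
    exact ⟨w, hw, h.subset Set.inter_subset_left⟩
  · simp only [SimpleGraph.IsClique, Set.Pairwise] at h
    push Not at h
    obtain ⟨v, hv, z, hz, hvz, hn⟩ := h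
    obtain ⟨w, hw, -, -, hs⟩ := exists_simplicial_away hH _ W hW rfl v hv z hz hvz.symm hn
    exact ⟨w, hw, hs⟩

/-- Attach a leaf `none` at `t`. -/
def addLeaf {T : Type*} (tree : SimpleGraph T) (t : T) : SimpleGraph (Option T) :=
  tree.map (Function.Embedding.some) ⊔ edge none (some t)

lemma addLeaf_isTree {T : Type*} [Finite T] {tree : SimpleGraph T} (h : tree.IsTree) (t : T) :
    (addLeaf tree t).IsTree := by
  classical
  rw [isTree_iff_connected_and_card] at h ⊢
  refine ⟨?_, ?_⟩
  · have hs : ∀ s, (addLeaf tree t).Reachable (some s) (some t) := by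
      intro s
      have := (h.1.preconnected s t).map
        (⟨some, fun {a b} hab => Or.inl ⟨by simpa using hab.ne, a, b, hab, rfl, rfl⟩⟩ : tree →g addLeaf tree t)
      exact this
    have hn : (addLeaf tree t).Reachable none (some t) := by
      apply Adj.reachable
      exact Or.inr (by simp [edge_adj])
    have hall : ∀ s, (addLeaf tree t).Reachable s (some t) := by
      rintro (_ | s)
      exacts [hn, hs s]
    exact ⟨fun a b => (hall a).trans (hall b).symm⟩
  · have he : (addLeaf tree t).edgeSet =
        insert s(none, some t) (Sym2.map some '' tree.edgeSet) := by
      rw [addLeaf, edgeSet_sup, edgeSet_map, edge_edgeSet_of_ne (by simp), Set.union_comm]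
      rfl
    have hnot : s(none, some t) ∉ (Sym2.map some '' tree.edgeSet) := by
      rintro ⟨e, -, he⟩
      induction e with
      | _ a b => simp at he
    have h2 := h.2
    rw [Nat.card_coe_set_eq] at h2 ⊢
    rw [he, Set.ncard_insert_of_notMem hnot (Set.toFinite _),
      Set.ncard_image_of_injective _ (Sym2.map.injective (Option.some_injective T)), h2,
      Finite.card_option]

lemma addLeaf_connectedIn {T : Type*} {tree : SimpleGraph T} (t : T) {S : Set T} {a b : T}
    (h : ConnectedIn tree S a b) {S' : Set (Option T)} (hS : ∀ s ∈ S, some s ∈ S') :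
    ConnectedIn (addLeaf tree t) S' (some a) (some b) := by
  obtain ⟨p, hp⟩ := h
  refine ⟨p.map (⟨some, fun {a b} hab => Or.inl ⟨by simpa using hab.ne, a, b, hab, rfl, rfl⟩⟩ : tree →g addLeaf tree t), ?_⟩
  intro x hx
  rw [Walk.support_map, List.mem_map] at hx
  obtain ⟨y, hy, rfl⟩ := hx
  exact hS y (hp y hy)

/-- A clique tree of `H[W]`. -/
structure CliqueTree {T : Type v} (H : SimpleGraph V) (W : Set V) (tree : SimpleGraph T)
    (χ : T → Set V) : Prop where
  isTree : tree.IsTree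
  sub : ∀ t, χ t ⊆ W
  clique : ∀ t, H.IsClique (χ t)
  maxl : ∀ t, ∀ K, K ⊆ W → H.IsClique K → χ t ⊆ K → K = χ t
  cover : ∀ K, K ⊆ W → H.IsClique K → ∃ t, K ⊆ χ t
  inj : Function.Injective χ
  trace : ∀ x : V, ∀ t₁, x ∈ χ t₁ → ∀ t₂, x ∈ χ t₂ → ConnectedIn tree {t | x ∈ χ t} t₁ t₂

lemma exists_cliqueTree {H : SimpleGraph V} (hH : IsChordal H) (n : ℕ) :
    ∀ W : Set V, W.Finite → W.ncard = n → ∃ (T : Type) (_ : Finite T) (tree : SimpleGraph T)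
      (χ : T → Set V), CliqueTree H W tree χ := by
  classical
  induction n with
  | zero =>
    intro W hW hn
    rw [Set.ncard_eq_zero hW] at hn
    subst hn
    refine ⟨Unit, inferInstance, ⊥, fun _ => ∅, IsTree.of_subsingleton, by simp, by simp, ?_, ?_,
      fun _ _ _ => rfl, by simp⟩
    · intro _ K hK _ _
      exact Set.subset_empty_iff.1 hK
    · intro K hK _
      exact ⟨(), hK⟩
  | succ n ih =>
    intro W hW hn
    obtain ⟨v, hv, hsim⟩ := exists_simplicial hH W hW
      ((Set.ncard_pos hW).1 (by omega))
    obtain ⟨T, hT, tree, χ, h⟩ := ih (W \ {v}) (hW.diff)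
      (by rw [Set.ncard_diff_singleton_of_mem hv]; omega)
    set N : Set V := W ∩ H.neighborSet v with hN
    have hvN : v ∉ N := fun h => H.irrefl h.2
    have hNW : N ⊆ W \ {v} := fun a ha => ⟨ha.1, fun h => hvN (h ▸ ha)⟩
    have hNv : H.IsClique (insert v N) := hsim.insert (fun b hb _ => hb.2)
    have hinsW : insert v N ⊆ W := Set.insert_subset hv Set.inter_subset_left
    have hKv : ∀ K, K ⊆ W → H.IsClique K → v ∈ K → K ⊆ insert v N := by
      intro K hK hc hvK a ha
      by_cases hav : a = v
      · exact Or.inl hav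
      · exact Or.inr ⟨hK ha, hc hvK ha (Ne.symm hav)⟩
    have hKnv : ∀ K, K ⊆ W → v ∉ K → K ⊆ W \ {v} :=
      fun K hK hvK a ha => ⟨hK ha, fun h => hvK (h ▸ ha)⟩
    have hvχ : ∀ t, v ∉ χ t := fun t ht => (h.sub t ht).2 rfl
    have hmaxN : ∀ K, K ⊆ W → H.IsClique K → insert v N ⊆ K → K = insert v N :=
      fun K hK hc hs => (hKv K hK hc (hs (Or.inl rfl))).antisymm hs
    obtain ⟨t, ht⟩ := h.cover N hNW hsim
    -- other bags stay maximal
    have hmaxo : ∀ s, χ s ≠ N → ∀ K, K ⊆ W → H.IsClique K → χ s ⊆ K → K = χ s := by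
      intro s hsN K hK hc hs
      by_cases hvK : v ∈ K
      · exfalso
        have h1 : χ s ⊆ N := fun a ha => by
          rcases hKv K hK hc hvK (hs ha) with h2 | h2
          · exact absurd (h2 ▸ ha) (hvχ s)
          · exact h2
        exact hsN (h.maxl s N hNW hsim h1).symm
      · exact h.maxl s K (hKnv K hK hvK) hc hs
    by_cases hNt : χ t = N
    · refine ⟨T, hT, tree, Function.update χ t (insert v N), h.isTree, ?_, ?_, ?_, ?_, ?_, ?_⟩
      · intro s
        by_cases hst : s = t
        · subst hst; simpa using hinsW
        · simpa [hst] using (h.sub s).trans Set.diff_subset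
      · intro s
        by_cases hst : s = t
        · subst hst; simpa using hNv
        · simpa [hst] using h.clique s
      · intro s
        by_cases hst : s = t
        · subst hst; simpa using hmaxN
        · rw [Function.update_of_ne hst]
          exact hmaxo s (fun h' => hst (h.inj (h'.trans hNt.symm)))
      · intro K hK hc
        by_cases hvK : v ∈ K
        · exact ⟨t, by simpa using hKv K hK hc hvK⟩
        · obtain ⟨s, hs⟩ := h.cover K (hKnv K hK hvK) hc
          by_cases hst : s = t
          · subst hst
            exact ⟨s, by simpa using (hs.trans hNt.le).trans (Set.subset_insert _ _)⟩
          · exact ⟨s, by simpa [hst] using hs⟩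
      · intro a b hab
        by_cases ha : a = t <;> by_cases hb : b = t
        · rw [ha, hb]
        · subst ha
          rw [Function.update_self, Function.update_of_ne hb] at hab
          exact absurd (hab ▸ Set.mem_insert v N) (hvχ b)
        · subst hb
          rw [Function.update_self, Function.update_of_ne ha] at hab
          exact absurd (hab ▸ Set.mem_insert v N) (hvχ a)
        · rw [Function.update_of_ne hb, Function.update_of_ne ha] at hab
          exact h.inj hab
      · intro x
        by_cases hxv : x = v
        · subst hxv
          have : ∀ s, x ∈ Function.update χ t (insert x N) s → s = t := by
            intro s hs
            by_contra hst
            rw [Function.update_of_ne hst] at hs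
            exact hvχ s hs
          intro a ha b hb
          obtain rfl := this a ha
          obtain rfl := this b hb
          exact ConnectedIn.refl ha
        · have : ∀ s, x ∈ Function.update χ t (insert v N) s ↔ x ∈ χ s := by
            intro s
            by_cases hst : s = t
            · subst hst; simp [hxv, hNt]
            · simp [hst]
          simp only [this]
          exact h.trace x
    · have hne : ∀ s, χ s ≠ N := by
        intro s hs
        have := h.maxl s (χ t) (h.sub t) (h.clique t) (hs.le.trans ht)
        exact hNt (this.trans hs)
      refine ⟨Option T, inferInstance, addLeaf tree t, fun o => o.elim (insert v N) χ,
        addLeaf_isTree h.isTree t, ?_, ?_, ?_, ?_, ?_, ?_⟩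
      · rintro (_ | s)
        · exact hinsW
        · exact (h.sub s).trans Set.diff_subset
      · rintro (_ | s)
        · exact hNv
        · exact h.clique s
      · rintro (_ | s)
        · exact hmaxN
        · exact hmaxo s (hne s)
      · intro K hK hc
        by_cases hvK : v ∈ K
        · exact ⟨none, hKv K hK hc hvK⟩
        · obtain ⟨s, hs⟩ := h.cover K (hKnv K hK hvK) hc
          exact ⟨some s, hs⟩
      · rintro (_ | a) (_ | b) hab
        · rfl
        · simp only [Option.elim] at hab
          exact absurd (hab ▸ Set.mem_insert v N) (hvχ b)
        · simp only [Option.elim] at hab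
          exact absurd (hab ▸ Set.mem_insert v N) (hvχ a)
        · exact congrArg some (h.inj hab)
      · intro x
        have hsome : ∀ a, x ∈ χ a → ∀ b, x ∈ χ b → ConnectedIn (addLeaf tree t)
            {o : Option T | x ∈ o.elim (insert v N) χ} (some a) (some b) := fun a ha b hb =>
          addLeaf_connectedIn t (h.trace x a ha b hb) (fun s hs => hs)
        have hnone : x ∈ insert v N → ∀ b, x ∈ χ b → ConnectedIn (addLeaf tree t)
            {o : Option T | x ∈ o.elim (insert v N) χ} none (some b) := by
          intro hx b hb
          have hxt : x ∈ χ t := by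
            rcases hx with rfl | hx
            · exact absurd hb (hvχ b)
            · exact ht hx
          refine (ConnectedIn.of_adj (w := some t) (Or.inr (by simp [edge_adj])) hx hxt).trans
            (hsome t hxt b hb)
        rintro (_ | a) ha (_ | b) hb
        · exact ConnectedIn.refl ha
        · exact hnone ha b hb
        · exact (hnone hb a ha).symm
        · exact hsome a ha b hb

lemma connectedIn_map {T T' : Type*} {tree : SimpleGraph T} {tree' : SimpleGraph T'} {S : Set T}
    {S' : Set T'} {a b : T} (h : ConnectedIn tree S a b) (f : tree →g tree')
    (hS : ∀ s ∈ S, f s ∈ S') : ConnectedIn tree' S' (f a) (f b) := by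
  obtain ⟨p, hp⟩ := h
  refine ⟨p.map f, fun x hx => ?_⟩
  rw [Walk.support_map, List.mem_map] at hx
  obtain ⟨y, hy, rfl⟩ := hx
  exact hS y (hp y hy)

lemma treewidth_spec [Finite V] (G : SimpleGraph V) :
    ∃ (n : ℕ) (tree : SimpleGraph (Fin n)) (χ : Fin n → Set V),
    IsTreeDecomp G tree χ ∧ ∀ t, (χ t).ncard ≤ treewidth G + 1 := by
  refine Nat.sInf_mem (s := {w | ∃ (n : ℕ) (tree : SimpleGraph (Fin n)) (χ : Fin n → Set V),
    IsTreeDecomp G tree χ ∧ ∀ t, (χ t).ncard ≤ w + 1}) ?_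
  refine ⟨Nat.card V, 1, ⊥, fun _ => Set.univ, ⟨IsTree.of_subsingleton, by simp, by simp, by simp, ?_⟩,
    by simp [Set.ncard_univ]⟩
  intro x a _ b _
  obtain rfl := Subsingleton.elim a b
  exact ConnectedIn.refl (by simp)

/-- Every graph has a structured tree decomposition of width `tw(G)`:
all bags are potential maximal cliques and have at most `tw(G) + 1` vertices. -/
theorem stmt0 [Finite V] (G : SimpleGraph V) :
    ∃ (n : ℕ) (tree : SimpleGraph (Fin n)) (χ : Fin n → Set V),
      IsTreeDecomp G tree χ ∧ (∀ t, IsPMC G (χ t)) ∧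
      ∀ t, (χ t).ncard ≤ treewidth G + 1 := by
  classical
  obtain ⟨n₀, tree₀, χ₀, h₀, hw₀⟩ := treewidth_spec G
  have hG₀ : G ≤ bagGraph χ₀ := fun x y hxy =>
    ⟨hxy.ne, h₀.edge_bag x trivial y trivial hxy⟩
  obtain ⟨H, hHle, hHmin⟩ := (Set.toFinite {H : SimpleGraph V | G ≤ H ∧ IsChordal H}).exists_le_minimal
    (show bagGraph χ₀ ∈ {H : SimpleGraph V | G ≤ H ∧ IsChordal H} from ⟨hG₀, bagGraph_chordal h₀⟩)
  have hHc : IsMinimalChordalCompletion G H :=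
    ⟨hHmin.1.1, hHmin.1.2, fun H' h1 h2 h3 => h2.antisymm (hHmin.2 ⟨h1, h3⟩ h2)⟩
  obtain ⟨T, hT, tree, χ, h⟩ := exists_cliqueTree hHc.2.1 _ Set.univ (Set.toFinite _) rfl
  obtain ⟨n, ⟨e⟩⟩ := Finite.exists_equiv_fin T
  let I : tree.comap e.symm ≃g tree := ⟨e.symm, Iff.rfl⟩
  refine ⟨n, tree.comap e.symm, fun i => χ (e.symm i), ⟨?_, by simp, ?_, ?_, ?_⟩, ?_, ?_⟩
  · exact I.isTree_iff.2 h.isTree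
  · intro x _
    obtain ⟨t, ht⟩ := h.cover {x} (by simp) (by simp)
    exact ⟨e t, by simpa using ht⟩
  · intro x _ y _ hxy
    obtain ⟨t, ht⟩ := h.cover {x, y} (by simp) (by simp [SimpleGraph.isClique_pair, hHc.1 hxy])
    exact ⟨e t, by simpa [Set.insert_subset_iff] using ht⟩
  · intro x a ha b hb
    obtain ⟨p, hp⟩ := h.trace x _ ha _ hb
    have := connectedIn_map (S' := {t | x ∈ χ (e.symm t)}) ⟨p, hp⟩
      (I.symm : tree →g tree.comap e.symm) (fun s hs => by
        show x ∈ χ (e.symm (e s))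
        rw [e.symm_apply_apply]
        exact hs)
    have ea : (I.symm : tree →g tree.comap e.symm) (e.symm a) = a := e.apply_symm_apply a
    have eb : (I.symm : tree →g tree.comap e.symm) (e.symm b) = b := e.apply_symm_apply b
    rwa [ea, eb] at this
  · intro i
    exact ⟨H, hHc, h.clique _, fun K hK hs => h.maxl _ K (by simp) hK hs⟩
  · intro i
    obtain ⟨t, ht⟩ := clique_in_bag h₀ (χ (e.symm i)) (Set.toFinite _)
      (fun a ha b hb hab => hHle (h.clique _ ha hb hab))
    exact (Set.ncard_le_ncard ht (Set.toFinite _)).trans (hw₀ t)
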